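/- arXiv:1304.1236 — 2 statements merged into one kernel-verified Lean document; each statement's English description precedes it below -/
import Mathlib

section
/- Let (A_n, φ_n), n = 1,2,…, and (A, φ) be algebraic probability spaces, k ≥ 1, and let a_n, z_{1n}, …, z_{kn} ∈ A_n be self-adjoint elements that mutually commute for each n. Assume a_n converges in moments to a self-adjoint a ∈ A and, for real numbers ζ_1,…,ζ_k, each z_{in} converges in moments to ζ_i·1 (i.e. lim_n φ_n(z_{in}^m) = ζ_i^m for all m ≥ 1). Then for every noncommutative polynomial p(x, y_1, …, y_k) and every m ≥ 1, lim_{n→∞} φ_n( p(a_n, z_{1n}, …, z_{kn})^m ) = φ( p(a, ζ_1·1, …, ζ_k·1)^m ); in particular, the traciality and uniform-boundedness hypotheses are not needed in the commutative case. -/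
open Filter Topology
open scoped ComplexOrder
open Asymptotics

/-!
Since positive functionals satisfy the Cauchy–Schwarz inequality, moments of products of commuting
self-adjoint elements are bounded as soon as the moments of the factors are. If `z` converges in
moments to the scalar `ζ`, then `φₙ ((zₙ - ζ)²) → 0`, so by Cauchy–Schwarz again `zₙ` may be
replaced by `ζ` next to any factor with bounded second moment. In a word in commuting letters this
removes all letters with a scalar limit and leaves a power of the one remaining letter.
-/

section PositiveFunctional

variable {A : Type*} [NonUnitalRing A] [Module ℂ A] [IsScalarTower ℂ A A] [SMulCommClass ℂ A A]
  [StarRing A] [StarModule ℂ A] {f : A →ₗ[ℂ] ℂ}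

theorem conj_map_star_mul (hf : ∀ a, 0 ≤ f (star a * a)) (x y : A) :
    starRingEnd ℂ (f (star y * x)) = f (star x * y) := by
  have im_map_self (a : A) : (f (star a * a)).im = 0 := (Complex.nonneg_iff.1 (hf a)).2.symm
  have expand (c : ℂ) : f (star (x + c • y) * (x + c • y)) =
      f (star x * x) + (c * f (star x * y) + star c * f (star y * x)) +
        Complex.normSq c * f (star y * y) := by
    simp only [star_add, star_smul, add_mul, mul_add, smul_mul_assoc, mul_smul_comm, map_add,
      map_smul, smul_eq_mul, Complex.normSq_eq_conj_mul_self, Complex.star_def]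
    ring
  have im_sum (c : ℂ) : (c * f (star x * y) + star c * f (star y * x)).im = 0 := by
    simpa only [expand, Complex.add_im, Complex.im_ofReal_mul, im_map_self, mul_zero, zero_add,
      add_zero] using im_map_self (x + c • y)
  have im_add : (f (star x * y)).im + (f (star y * x)).im = 0 := by simpa using im_sum 1
  have re_sub : (f (star x * y)).re - (f (star y * x)).re = 0 := by
    simpa [sub_eq_add_neg] using im_sum Complex.I
  apply Complex.ext
  · rw [Complex.conj_re]; linarith
  · rw [Complex.conj_im]; linarith

/-- The semi-inner product `⟪x, y⟫ = f (star x * y)` of the GNS construction. -/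
noncomputable abbrev gnsPreInnerProductSpaceCore (hf : ∀ a, 0 ≤ f (star a * a)) :
    PreInnerProductSpace.Core ℂ A where
  inner x y := f (star x * y)
  conj_inner_symm := conj_map_star_mul hf
  re_inner_nonneg x := (Complex.nonneg_iff.1 (hf x)).1
  add_left x y z := by simp [add_mul]
  smul_left x y c := by simp [smul_mul_assoc]

theorem norm_map_star_mul_sq_le (hf : ∀ a, 0 ≤ f (star a * a)) (x y : A) :
    ‖f (star x * y)‖ ^ 2 ≤ ‖f (star x * x)‖ * ‖f (star y * y)‖ := by
  let := gnsPreInnerProductSpaceCore hf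
  calc ‖f (star x * y)‖ ^ 2 = ‖f (star x * y)‖ * ‖f (star y * x)‖ := by
        rw [sq, ← conj_map_star_mul hf y x, Complex.norm_conj]
    _ ≤ (f (star x * x)).re * (f (star y * y)).re :=
        InnerProductSpace.Core.inner_mul_inner_self_le (𝕜 := ℂ) x y
    _ ≤ ‖f (star x * x)‖ * ‖f (star y * y)‖ :=
        mul_le_mul (Complex.re_le_norm _) (Complex.re_le_norm _)
          (Complex.nonneg_iff.1 (hf y)).1 (norm_nonneg _)

end PositiveFunctional

section Words

variable {σ M : Type*} [Monoid M] {x : σ → M}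

theorem commute_list_prod_map {y : M} (h : ∀ i, Commute y (x i)) (w : List σ) :
    Commute y (w.map x).prod :=
  .list_prod_right _ _ <| List.forall_mem_map.2 fun i _ => h i

theorem isSelfAdjoint_list_prod_map [StarMul M] (hx : ∀ i, IsSelfAdjoint (x i))
    (hcomm : ∀ i j, Commute (x i) (x j)) (w : List σ) : IsSelfAdjoint (w.map x).prod := by
  induction w with
  | nil => simp
  | cons i w ih => simpa using ((hx i).commute_iff ih).1 (commute_list_prod_map (hcomm i) w)

theorem span_range_list_prod_map_freeAlgebra_ι (R σ : Type*) [CommSemiring R] :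
    Submodule.span R (Set.range fun w : List σ => (w.map (FreeAlgebra.ι R)).prod) = ⊤ := by
  have closure_range_ι :
      (Submonoid.closure (Set.range (FreeAlgebra.ι R (X := σ))) : Set _) =
        Set.range fun w : List σ => (w.map (FreeAlgebra.ι R)).prod := by
    rw [← FreeMonoid.mrange_lift, MonoidHom.coe_mrange,
      ← FreeMonoid.ofList.surjective.range_comp]
    simp only [Function.comp_def, FreeMonoid.lift_ofList]
  rw [← closure_range_ι, ← Algebra.adjoin_eq_span, FreeAlgebra.adjoin_range_ι,
    Algebra.top_toSubmodule]

theorem tendsto_map_freeAlgebra_lift_of_words {R N σ B E : Type*} [CommSemiring R]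
    [AddCommMonoid E] [Module R E] [TopologicalSpace E] [ContinuousAdd E] [ContinuousConstSMul R E]
    {l : Filter N} {A : N → Type*} [∀ n, Semiring (A n)] [∀ n, Algebra R (A n)]
    [Semiring B] [Algebra R B] {f : ∀ n, A n →ₗ[R] E} {φ : B →ₗ[R] E}
    {x : ∀ n, σ → A n} {b : σ → B}
    (h_words : ∀ w : List σ,
      Tendsto (fun n => f n (w.map (x n)).prod) l (𝓝 (φ (w.map b).prod)))
    (p : FreeAlgebra R σ) :
    Tendsto (fun n => f n (FreeAlgebra.lift R (x n) p)) l (𝓝 (φ (FreeAlgebra.lift R b p))) := by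
  have hp : p ∈ Submodule.span R (Set.range fun w : List σ => (w.map (FreeAlgebra.ι R)).prod) := by
    simp [span_range_list_prod_map_freeAlgebra_ι]
  induction hp using Submodule.span_induction with
  | mem p hp =>
    obtain ⟨w, rfl⟩ := hp
    simpa [map_list_prod, Function.comp_def] using h_words w
  | zero => simpa using tendsto_const_nhds
  | add p q _ _ hp hq => simpa using hp.add hq
  | smul c p _ hp => simpa using hp.const_smul c

end Words

section Moments

variable {N : Type*} {l : Filter N} {A : N → Type*} [∀ n, Ring (A n)] [∀ n, Algebra ℂ (A n)]
  {f : ∀ n, A n →ₗ[ℂ] ℂ} {x y : ∀ n, A n}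

/-- The sequence `x` converges in moments to `b`: with respect to the functionals `f n` and `φ`,
every moment of `x n` converges along `l` to the corresponding moment of `b`. -/
def ConvergesInMoments {B : Type*} [Semiring B] [Algebra ℂ B] (l : Filter N)
    (f : ∀ n, A n →ₗ[ℂ] ℂ) (x : ∀ n, A n) (φ : B →ₗ[ℂ] ℂ) (b : B) : Prop :=
  ∀ m : ℕ, 1 ≤ m → Tendsto (fun n => f n (x n ^ m)) l (𝓝 (φ (b ^ m)))

/-- Every moment of `x n` is eventually bounded along `l`. -/
def HasBoundedMoments (l : Filter N) (f : ∀ n, A n →ₗ[ℂ] ℂ) (x : ∀ n, A n) : Prop :=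
  ∀ m : ℕ, (fun n => f n (x n ^ m)) =O[l] fun _ => (1 : ℝ)

theorem ConvergesInMoments.tendsto_map_pow {B : Type*} [Semiring B] [Algebra ℂ B]
    {φ : B →ₗ[ℂ] ℂ} {b : B} (h : ConvergesInMoments l f x φ b) (hf_one : ∀ n, f n 1 = 1)
    (hφ_one : φ 1 = 1) (m : ℕ) : Tendsto (fun n => f n (x n ^ m)) l (𝓝 (φ (b ^ m))) := by
  rcases m.eq_zero_or_pos with rfl | hm
  · simpa [hf_one, hφ_one] using tendsto_const_nhds
  · exact h m hm

theorem ConvergesInMoments.hasBoundedMoments {B : Type*} [Semiring B] [Algebra ℂ B]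
    {φ : B →ₗ[ℂ] ℂ} {b : B} (h : ConvergesInMoments l f x φ b) (hf_one : ∀ n, f n 1 = 1)
    (hφ_one : φ 1 = 1) : HasBoundedMoments l f x :=
  fun m => (h.tendsto_map_pow hf_one hφ_one m).isBigO_one ℝ

theorem tendsto_map_sub_algebraMap_sq {ζ : ℂ} (hf_one : ∀ n, f n 1 = 1)
    (h_mean : Tendsto (fun n => f n (x n)) l (𝓝 ζ))
    (h_sq : Tendsto (fun n => f n (x n ^ 2)) l (𝓝 (ζ ^ 2))) :
    Tendsto (fun n => f n ((x n - algebraMap ℂ (A n) ζ) ^ 2)) l (𝓝 0) := by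
  have expand (n : N) : f n ((x n - algebraMap ℂ (A n) ζ) ^ 2) =
      f n (x n ^ 2) - 2 * ζ * f n (x n) + ζ ^ 2 := by
    have : (x n - algebraMap ℂ (A n) ζ) ^ 2 = x n ^ 2 - (2 * ζ) • x n + ζ ^ 2 • (1 : A n) := by
      simp only [Algebra.algebraMap_eq_smul_one, sq, sub_mul, mul_sub, smul_mul_assoc,
        mul_smul_comm, one_mul, mul_one]
      module
    simp [this, hf_one]
  simp_rw [expand]
  convert (h_sq.sub (h_mean.const_mul (2 * ζ))).add_const (ζ ^ 2) using 2
  ring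

variable [∀ n, StarRing (A n)] [∀ n, StarModule ℂ (A n)]

theorem isBigO_map_star_mul_sq (hf_pos : ∀ n a, 0 ≤ f n (star a * a)) (x y : ∀ n, A n) :
    (fun n => f n (star (x n) * y n) ^ 2) =O[l]
      fun n => f n (star (x n) * x n) * f n (star (y n) * y n) :=
  .of_bound 1 <| .of_forall fun n => by
    simpa using norm_map_star_mul_sq_le (hf_pos n) (x n) (y n)

theorem isBigO_one_map_star_mul (hf_pos : ∀ n a, 0 ≤ f n (star a * a))
    (hx : (fun n => f n (star (x n) * x n)) =O[l] fun _ => (1 : ℝ))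
    (hy : (fun n => f n (star (y n) * y n)) =O[l] fun _ => (1 : ℝ)) :
    (fun n => f n (star (x n) * y n)) =O[l] fun _ => (1 : ℝ) :=
  .of_pow two_ne_zero <| (isBigO_map_star_mul_sq hf_pos x y).trans <| by
    simpa only [sq] using! hx.mul hy

theorem tendsto_map_star_mul_zero (hf_pos : ∀ n a, 0 ≤ f n (star a * a))
    (hx : Tendsto (fun n => f n (star (x n) * x n)) l (𝓝 0))
    (hy : (fun n => f n (star (y n) * y n)) =O[l] fun _ => (1 : ℝ)) :
    Tendsto (fun n => f n (star (x n) * y n)) l (𝓝 0) := by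
  have h_mul := ((isLittleO_one_iff ℝ).2 hx).mul_isBigO hy
  refine (isLittleO_one_iff ℝ).1 <| .of_pow (n := 2)
    ((isBigO_map_star_mul_sq hf_pos x y).trans_isLittleO ?_) two_ne_zero
  simpa only [sq] using! h_mul

theorem tendsto_map_mul_of_tendsto_scalar (hf_one : ∀ n, f n 1 = 1)
    (hf_pos : ∀ n a, 0 ≤ f n (star a * a)) (hx : ∀ n, IsSelfAdjoint (x n)) {ζ : ℝ} {c : ℂ}
    (h_mean : Tendsto (fun n => f n (x n)) l (𝓝 ζ))
    (h_sq : Tendsto (fun n => f n (x n ^ 2)) l (𝓝 (ζ ^ 2)))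
    (hy_bdd : (fun n => f n (star (y n) * y n)) =O[l] fun _ => (1 : ℝ))
    (hy : Tendsto (fun n => f n (y n)) l (𝓝 c)) :
    Tendsto (fun n => f n (x n * y n)) l (𝓝 (ζ * c)) := by
  have hx_sub (n : N) : star (x n - algebraMap ℂ (A n) ζ) = x n - algebraMap ℂ (A n) ζ := by
    simp [(hx n).star_eq, ← algebraMap_star_comm]
  have h_null : Tendsto (fun n => f n ((x n - algebraMap ℂ (A n) ζ) * y n)) l (𝓝 0) := by
    have := tendsto_map_sub_algebraMap_sq hf_one h_mean h_sq
    simpa only [hx_sub] using tendsto_map_star_mul_zero (x := fun n => x n - algebraMap ℂ _ ζ)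
      hf_pos (by simpa only [hx_sub, sq] using this) hy_bdd
  simpa [sub_mul, ← Algebra.smul_def] using h_null.add (hy.const_mul (ζ : ℂ))

theorem HasBoundedMoments.mul (hf_pos : ∀ n a, 0 ≤ f n (star a * a))
    (hx_sa : ∀ n, IsSelfAdjoint (x n)) (hy_sa : ∀ n, IsSelfAdjoint (y n))
    (hcomm : ∀ n, Commute (x n) (y n)) (hx : HasBoundedMoments l f x)
    (hy : HasBoundedMoments l f y) : HasBoundedMoments l f fun n => x n * y n := by
  intro m
  have star_pow_mul_pow {z : ∀ n, A n} (hz : ∀ n, IsSelfAdjoint (z n)) (n : N) :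
      star (z n ^ m) * z n ^ m = z n ^ (m + m) := by
    rw [((hz n).pow m).star_eq, pow_add]
  have h := isBigO_one_map_star_mul (x := fun n => x n ^ m) (y := fun n => y n ^ m) hf_pos
    (by simpa only [star_pow_mul_pow hx_sa] using hx (m + m))
    (by simpa only [star_pow_mul_pow hy_sa] using hy (m + m))
  simpa only [((hx_sa _).pow m).star_eq, (hcomm _).mul_pow] using h

variable {σ : Type*} {x : ∀ n, σ → A n}

theorem HasBoundedMoments.list_prod_map (hf_one : ∀ n, f n 1 = 1)
    (hf_pos : ∀ n a, 0 ≤ f n (star a * a)) (hx_sa : ∀ n i, IsSelfAdjoint (x n i))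
    (hcomm : ∀ n i j, Commute (x n i) (x n j))
    (hx : ∀ i, HasBoundedMoments l f fun n => x n i) (w : List σ) :
    HasBoundedMoments l f fun n => (w.map (x n)).prod := by
  induction w with
  | nil => exact fun m => by simpa [hf_one] using isBigO_const_const (1 : ℂ) (one_ne_zero' ℝ) l
  | cons i w ih =>
    simpa using (hx i).mul hf_pos (hx_sa · i)
      (fun n => isSelfAdjoint_list_prod_map (hx_sa n) (hcomm n) w)
      (fun n => commute_list_prod_map (hcomm n i) w) ih

theorem tendsto_map_mul_list_prod_of_tendsto_scalar (hf_one : ∀ n, f n 1 = 1)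
    (hf_pos : ∀ n a, 0 ≤ f n (star a * a)) (hx_sa : ∀ n i, IsSelfAdjoint (x n i))
    (hcomm : ∀ n i j, Commute (x n i) (x n j))
    (hx : ∀ i, HasBoundedMoments l f fun n => x n i) {i : σ} {w : List σ} {ζ : ℝ} {c : ℂ}
    (h_mean : Tendsto (fun n => f n (x n i)) l (𝓝 ζ))
    (h_sq : Tendsto (fun n => f n (x n i ^ 2)) l (𝓝 (ζ ^ 2)))
    (hw : Tendsto (fun n => f n (w.map (x n)).prod) l (𝓝 c)) :
    Tendsto (fun n => f n (x n i * (w.map (x n)).prod)) l (𝓝 (ζ * c)) := by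
  refine tendsto_map_mul_of_tendsto_scalar hf_one hf_pos (hx_sa · i) h_mean h_sq ?_ hw
  simpa only [(isSelfAdjoint_list_prod_map (hx_sa _) (hcomm _) w).star_eq, sq] using
    HasBoundedMoments.list_prod_map hf_one hf_pos hx_sa hcomm hx w 2

end Moments

section CommutingLetters

variable {N σ B : Type*} {l : Filter N} {A : N → Type*} [∀ n, Ring (A n)] [∀ n, Algebra ℂ (A n)]
  [∀ n, StarRing (A n)] [∀ n, StarModule ℂ (A n)] [Semiring B] [Algebra ℂ B]
  {f : ∀ n, A n →ₗ[ℂ] ℂ} {φ : B →ₗ[ℂ] ℂ} {x : ∀ n, σ → A n} {b : σ → B}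

theorem tendsto_map_list_prod_of_commute (hf_one : ∀ n, f n 1 = 1)
    (hf_pos : ∀ n a, 0 ≤ f n (star a * a)) (hφ_one : φ 1 = 1)
    (hx_sa : ∀ n i, IsSelfAdjoint (x n i)) (hcomm : ∀ n i j, Commute (x n i) (x n j))
    (hconv : ∀ i, ConvergesInMoments l f (fun n => x n i) φ (b i)) (s : σ)
    (hscalar : ∀ i ≠ s, ∃ ζ : ℝ, b i = (ζ : ℂ) • 1) (w : List σ) :
    Tendsto (fun n => f n (w.map (x n)).prod) l (𝓝 (φ (w.map b).prod)) := by
  -- The letters `s` are collected on the left: their limit is known only for a full power.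
  suffices H : ∀ r : ℕ, Tendsto (fun n => f n (x n s ^ r * (w.map (x n)).prod)) l
      (𝓝 (φ (b s ^ r * (w.map b).prod))) by simpa using H 0
  induction w with
  | nil => simpa using (hconv s).tendsto_map_pow hf_one hφ_one
  | cons i w ih =>
    intro r
    by_cases hi : i = s
    · simpa [hi, pow_succ, mul_assoc] using ih (r + 1)
    · obtain ⟨ζ, hζ⟩ := hscalar i hi
      have h_moment {m : ℕ} (hm : 1 ≤ m) :
          Tendsto (fun n => f n (x n i ^ m)) l (𝓝 ((ζ : ℂ) ^ m)) := by
        simpa [hζ, smul_pow, hφ_one] using hconv i m hm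
      have h_word (n : N) :
          ((List.replicate r s ++ w).map (x n)).prod = x n s ^ r * (w.map (x n)).prod := by
        simp
      have h_lim := tendsto_map_mul_list_prod_of_tendsto_scalar hf_one hf_pos hx_sa hcomm
        (fun j => (hconv j).hasBoundedMoments hf_one hφ_one) (w := .replicate r s ++ w)
        (by simpa using h_moment le_rfl) (h_moment one_le_two) (by simpa only [h_word] using ih r)
      have h_comm (n : N) : x n s ^ r * (x n i * (w.map (x n)).prod) =
          x n i * (x n s ^ r * (w.map (x n)).prod) :=
        ((hcomm n s i).pow_left r).left_comm _
      simpa [h_word, h_comm, hζ] using h_lim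

theorem moments_of_noncommutative_polynomial_converge_of_commute_general (hf_one : ∀ n, f n 1 = 1)
    (hf_pos : ∀ n a, 0 ≤ f n (star a * a)) (hφ_one : φ 1 = 1)
    (hx_sa : ∀ n i, IsSelfAdjoint (x n i)) (hcomm : ∀ n i j, Commute (x n i) (x n j))
    (hconv : ∀ i, ConvergesInMoments l f (fun n => x n i) φ (b i)) (s : σ)
    (hscalar : ∀ i ≠ s, ∃ ζ : ℝ, b i = (ζ : ℂ) • 1) (p : FreeAlgebra ℂ σ) :
    Tendsto (fun n => f n (FreeAlgebra.lift ℂ (x n) p)) l (𝓝 (φ (FreeAlgebra.lift ℂ b p))) :=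
  tendsto_map_freeAlgebra_lift_of_words
    (tendsto_map_list_prod_of_commute hf_one hf_pos hφ_one hx_sa hcomm hconv s hscalar) p

end CommutingLetters

/-- Remark 2.3: in the commutative case the traciality and uniform-boundedness
hypotheses are redundant. Given algebraic probability spaces `(A_n, φ_n)` and `(B, φ)`,
mutually commuting self-adjoint elements `a_n, z_{1n}, …, z_{kn} ∈ A_n`, a self-adjoint
`b ∈ B` and reals `ζ_1, …, ζ_k` with `a_n → b` and `z_{in} → ζ_i·1` in moments, the
moments of `p(a_n, z_{1n}, …, z_{kn})` converge to those of `p(b, ζ_1·1, …, ζ_k·1)` for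
every noncommutative polynomial `p` (an element of the free `ℂ`-algebra on `k + 1`
generators, generator `0` standing for `x` and generator `i + 1` for `y_i`). -/
theorem moments_of_noncommutative_polynomial_converge_of_commute
    (A : ℕ → Type*) [∀ n, Ring (A n)] [∀ n, Algebra ℂ (A n)]
    [∀ n, StarRing (A n)] [∀ n, StarModule ℂ (A n)]
    (B : Type*) [Ring B] [Algebra ℂ B] [StarRing B] [StarModule ℂ B]
    (φn : ∀ n, A n →ₗ[ℂ] ℂ) (φ : B →ₗ[ℂ] ℂ)
    (hφn_unital : ∀ n, φn n 1 = 1) (hφn_pos : ∀ n a, 0 ≤ φn n (star a * a))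
    (hφ_unital : φ 1 = 1) (hφ_pos : ∀ x, 0 ≤ φ (star x * x))
    (k : ℕ) (hk : 1 ≤ k)
    (a : ∀ n, A n) (z : Fin k → ∀ n, A n) (b : B) (ζ : Fin k → ℝ)
    (ha_sa : ∀ n, star (a n) = a n) (hz_sa : ∀ i n, star (z i n) = z i n)
    (hb_sa : star b = b)
    -- the elements `a_n, z_{1n}, …, z_{kn}` mutually commute
    (hcomm_az : ∀ n i, Commute (a n) (z i n))
    (hcomm_zz : ∀ n i j, Commute (z i n) (z j n))
    -- convergence in moments
    (hconv_a : ∀ m : ℕ, 1 ≤ m → Tendsto (fun n => φn n (a n ^ m)) atTop (𝓝 (φ (b ^ m))))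
    (hconv_z : ∀ i, ∀ m : ℕ, 1 ≤ m →
      Tendsto (fun n => φn n (z i n ^ m)) atTop (𝓝 ((ζ i : ℂ) ^ m)))
    (p : FreeAlgebra ℂ (Fin (k + 1))) (m : ℕ) (hm : 1 ≤ m) :
    Tendsto
      (fun n => φn n ((FreeAlgebra.lift ℂ
        (fun i => (Fin.cases (a n) (fun j => z j n) i : A n)) p) ^ m))
      atTop
      (𝓝 (φ ((FreeAlgebra.lift ℂ
        (fun i => (Fin.cases b (fun j => (ζ j : ℂ) • (1 : B)) i : B)) p) ^ m))) := by
  simp_rw [← map_pow]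
  refine moments_of_noncommutative_polynomial_converge_of_commute_general
    (x := fun n i => (Fin.cases (a n) (z · n) i : A n)) hφn_unital hφn_pos hφ_unital
    (b := fun i => (Fin.cases b (fun j => (ζ j : ℂ) • 1) i : B)) (s := 0)
    (fun n => Fin.cases (ha_sa n) (hz_sa · n))
    (fun n => Fin.cases (Fin.cases (.refl _) (hcomm_az n))
      fun i => Fin.cases (hcomm_az n i).symm (hcomm_zz n i))
    (Fin.cases hconv_a fun i m hm => ?_)
    (Fin.cases (absurd rfl) fun i _ => ⟨ζ i, rfl⟩) (p ^ m)
  simpa [smul_pow, hφ_unital] using hconv_z i m hm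
end

section
/- Let (A, φ) be an algebraic probability space and b ∈ A a self-adjoint element with φ(b) = 0 and φ(b²) = 1. For N ≥ 1 and i ∈ {1,…,N} let b(i) = 1⊗…⊗b⊗…⊗1 ∈ A^{⊗N}, and for 1 ≤ n ≤ N set b^{(N,n)} = Σ_{1 ≤ i_1 < … < i_n ≤ N} b(i_1)···b(i_n). Then for every fixed n ≥ 1, n!·b^{(N,n)}/N^{n/2} converges in moments as N → ∞ to H̃_n(g) where g is standard Gaussian; that is, for every integer m ≥ 1, lim_{N→∞} φ^{⊗N}( (n!·b^{(N,n)}/N^{n/2})^m ) = ∫_ℝ H̃_n(x)^m dγ(x), where γ is the standard Gaussian measure N(0,1) and H̃_n is the monic Hermite polynomial of degree n. -/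
open scoped TensorProduct ComplexOrder
open Filter Topology

noncomputable section

/-- The product state `φ^{⊗N}` on the `N`-fold algebraic tensor power `A^{⊗N}`,
determined by `φ^{⊗N}(a_1 ⊗ ⋯ ⊗ a_N) = φ(a_1) ⋯ φ(a_N)`. -/
def prodState {A : Type*} [Ring A] [Algebra ℂ A] (φ : A →ₗ[ℂ] ℂ) (N : ℕ) :
    (⨂[ℂ] _ : Fin N, A) →ₗ[ℂ] ℂ :=
  PiTensorProduct.lift ((MultilinearMap.mkPiAlgebra ℂ (Fin N) ℂ).compLinearMap fun _ => φ)

/-- `b(i) = 1 ⊗ ⋯ ⊗ b ⊗ ⋯ ⊗ 1 ∈ A^{⊗N}` with `b` at the `i`-th tensor factor. -/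
def elemAt {A : Type*} [Ring A] [Algebra ℂ A] (b : A) (N : ℕ) (i : Fin N) :
    ⨂[ℂ] _ : Fin N, A :=
  PiTensorProduct.tprod ℂ (Function.update (fun _ => (1 : A)) i b)

/-- `b^{(N,n)} = ∑_{1 ≤ i_1 < ⋯ < i_n ≤ N} b(i_1) ⋯ b(i_n)` (and `b^{(N,0)} = 1`). -/
def bPow {A : Type*} [Ring A] [Algebra ℂ A] (b : A) (N n : ℕ) : ⨂[ℂ] _ : Fin N, A :=
  ∑ s ∈ Finset.powersetCard n (Finset.univ : Finset (Fin N)),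
    ((s.sort (· ≤ ·)).map (elemAt b N)).prod

/-- `F^{(N,n)}(y)`: the sum, over all ways to choose `n` distinct tensor positions and
to place `y` at one of them and `b` at the other `n - 1` (with `1` elsewhere), of the
corresponding elementary tensors. -/
def Fsum {A : Type*} [Ring A] [Algebra ℂ A] (b y : A) (N n : ℕ) : ⨂[ℂ] _ : Fin N, A :=
  ∑ s ∈ Finset.powersetCard n (Finset.univ : Finset (Fin N)), ∑ i ∈ s,
    PiTensorProduct.tprod ℂ (fun j => if j = i then y else if j ∈ s then b else 1)

/-!
The commuting elements `x_i = b(i) / √N` form a triangular array, and `n! b^{(N,n)} / N^{n/2}` is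
the sum of `x_{f 1} ⋯ x_{f n}` over injections `f`, the simplest of the augmented monomials
`M_k = ∑_f ∏_j x_{f j} ^ k_j`. Multiplication by a power sum obeys a rule that does not involve `N`:
`p_l M_k = M_{(l, k)} + ∑_j M_{k + l e_j}`.

The power sums `p_1, p_2, p_3, …` tend to `g, 1, 0, …`. Writing `p_l` also for these limits, and
`:q:` for the Wick ordering `exp (-D² / 2) q` of a polynomial `q`, the limit of `M_k` is
`:∏_j p_{k_j}:`. The product rule persists in the limit, where it is `g :q: = :g q: + :q':` together
with `p_{k+l} = p_k' p_l'`. Hence convergence of all moments propagates from that of `E[M_k]`, where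
it amounts to `E[:q:] = q(0)`. In particular `n! b^{(N,n)} / N^{n/2} → :g^n: = H̃_n(g)`.
-/

section Hermite

open Polynomial

lemma derivative_hermite_succ (n : ℕ) :
    derivative (hermite (n + 1)) = ((n + 1 : ℕ) : ℤ[X]) * hermite n := by
  induction n with
  | zero => simp
  | succ n ih =>
    have h := hermite_succ n
    rw [hermite_succ (n + 1), derivative_sub, derivative_mul, ih, derivative_mul, h]
    simp only [derivative_X, derivative_natCast]
    push_cast
    ring

lemma derivative_hermite (n : ℕ) : derivative (hermite n) = (n : ℤ[X]) * hermite (n - 1) := by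
  cases n with
  | zero => simp
  | succ n => exact derivative_hermite_succ n

/-- Wick ordering: the linear map `X ^ n ↦ hermite n`, i.e. `exp (-D² / 2)` for `D = d/dX`. -/
def wick (R : Type*) [CommRing R] : R[X] →ₗ[R] R[X] :=
  lsum fun n => LinearMap.toSpanSingleton R R[X] ((hermite n).map (Int.castRingHom R))

section CommRing

variable {R : Type*} [CommRing R]

lemma wick_monomial (n : ℕ) (r : R) :
    wick R (monomial n r) = r • (hermite n).map (Int.castRingHom R) := by
  simp [wick]

lemma wick_X_pow (n : ℕ) : wick R (X ^ n) = (hermite n).map (Int.castRingHom R) := by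
  rw [X_pow_eq_monomial, wick_monomial, one_smul]

lemma wick_one : wick R 1 = 1 := by
  simpa using wick_X_pow (R := R) 0

lemma wick_X_mul (p : R[X]) : wick R (X * p) = X * wick R p - derivative (wick R p) := by
  induction p using Polynomial.induction_on' with
  | add p q hp hq => simp only [mul_add, map_add, hp, hq]; ring
  | monomial n r =>
    simp only [X_mul_monomial, wick_monomial, hermite_succ, Polynomial.map_sub,
      Polynomial.map_mul, map_X, derivative_map, smul_sub, mul_smul_comm, derivative_smul]

lemma derivative_wick (p : R[X]) : derivative (wick R p) = wick R (derivative p) := by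
  induction p using Polynomial.induction_on' with
  | add p q hp hq => simp only [map_add, hp, hq]
  | monomial n r =>
    rw [derivative_monomial, wick_monomial, wick_monomial, derivative_smul, derivative_map,
      derivative_hermite, Polynomial.map_mul, Polynomial.map_natCast, mul_smul,
      Nat.cast_smul_eq_nsmul, nsmul_eq_mul]

lemma X_mul_wick (p : R[X]) : X * wick R p = wick R (X * p) + wick R (derivative p) := by
  rw [wick_X_mul, derivative_wick, sub_add_cancel]

end CommRing

end Hermite

section Gaussian

open Polynomial MeasureTheory ProbabilityTheory

lemma integrable_eval_gaussianReal (μ : ℝ) (v : NNReal) (p : ℝ[X]) :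
    Integrable (fun x => p.eval x) (gaussianReal μ v) := by
  simp only [eval_eq_sum_range]
  refine integrable_finsetSum _ fun i _ => Integrable.const_mul ?_ _
  refine (integrable_norm_iff (by fun_prop)).1 ?_
  simpa [norm_pow] using (memLp_id_gaussianReal (μ := μ) (v := v) i).integrable_norm_pow'

/-- The expectation `E[p(g)]` for a standard Gaussian `g`, as a linear functional of `p`. -/
def gaussianExpectation : ℝ[X] →ₗ[ℝ] ℝ where
  toFun p := ∫ x, p.eval x ∂(gaussianReal 0 1)
  map_add' p q := by
    simpa only [eval_add] using integral_add (integrable_eval_gaussianReal 0 1 p)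
      (integrable_eval_gaussianReal 0 1 q)
  map_smul' r p := by
    simp only [eval_smul, RingHom.id_apply]
    exact integral_smul r _

lemma gaussianExpectation_apply (p : ℝ[X]) :
    gaussianExpectation p = ∫ x, p.eval x ∂(gaussianReal 0 1) := rfl

lemma gaussianExpectation_one : gaussianExpectation 1 = 1 := by simp [gaussianExpectation_apply]

lemma hasDerivAt_gaussianPDFReal (μ : ℝ) (v : NNReal) (x : ℝ) :
    HasDerivAt (gaussianPDFReal μ v) (-(x - μ) / v * gaussianPDFReal μ v x) x := by
  have hexponent : HasDerivAt (fun x => -(x - μ) ^ 2 / (2 * v)) (-(x - μ) / v) x :=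
    ((((hasDerivAt_id' x).sub_const μ).fun_pow 2).fun_neg.div_const _).congr_deriv (by
      push_cast; ring)
  exact (hexponent.exp.const_mul _).congr_deriv (by rw [gaussianPDFReal]; ring)

lemma integrable_gaussianPDFReal_mul_eval (μ : ℝ) {v : NNReal} (hv : v ≠ 0) (p : ℝ[X]) :
    Integrable fun x => gaussianPDFReal μ v x * p.eval x := by
  have h := integrable_eval_gaussianReal μ v p
  rw [gaussianReal_of_var_ne_zero _ hv, integrable_withDensity_iff_integrable_smul'
    (measurable_gaussianPDF _ _) (ae_of_all _ fun _ => gaussianPDF_lt_top)] at h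
  simpa only [toReal_gaussianPDF, smul_eq_mul] using h

lemma gaussianExpectation_X_mul (p : ℝ[X]) :
    gaussianExpectation (X * p) = gaussianExpectation (derivative p) := by
  have hderiv : ∀ x, HasDerivAt (fun x => gaussianPDFReal 0 1 x * p.eval x)
      (gaussianPDFReal 0 1 x * (derivative p - X * p).eval x) x := fun x =>
    ((hasDerivAt_gaussianPDFReal 0 1 x).mul (p.hasDerivAt x)).congr_deriv (by
      simp only [eval_sub, eval_mul, eval_X, NNReal.coe_one]; ring)
  have hzero := integral_eq_zero_of_hasDerivAt_of_integrable hderiv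
    (integrable_gaussianPDFReal_mul_eval 0 one_ne_zero _)
    (integrable_gaussianPDFReal_mul_eval 0 one_ne_zero _)
  rw [← sub_eq_zero, ← map_sub, ← neg_eq_zero, ← map_neg, neg_sub, gaussianExpectation_apply,
    integral_gaussianReal_eq_integral_smul one_ne_zero]
  simpa only [smul_eq_mul] using hzero

lemma gaussianExpectation_wick (p : ℝ[X]) : gaussianExpectation (wick ℝ p) = p.eval 0 := by
  induction p using Polynomial.induction_on' with
  | add p q hp hq => simp only [map_add, eval_add, hp, hq]
  | monomial n r =>
    cases n with
    | zero => simp [wick_monomial, gaussianExpectation_one, -monomial_zero_left]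
    | succ n =>
      rw [← X_mul_monomial, wick_X_mul, map_sub, gaussianExpectation_X_mul, sub_self]
      simp

end Gaussian

section AugmentedMonomial

open MvPolynomial

/-- The augmented monomial symmetric polynomial of the exponents `k`: the monomial symmetric
polynomial multiplied by the number of permutations of `ι` that preserve `k`. Summing over
injections instead of subsets keeps the product rule with power sums free of multiplicities. -/
def augMonomial (σ R : Type*) [Fintype σ] [CommSemiring R] {ι : Type*} [Fintype ι]
    (k : ι → ℕ+) : MvPolynomial σ R :=
  ∑ f : ι ↪ σ, ∏ j, X (f j) ^ (k j : ℕ)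

variable {σ R : Type*} [Fintype σ] [CommSemiring R]

lemma augMonomial_of_isEmpty {ι : Type*} [Fintype ι] [IsEmpty ι] (k : ι → ℕ+) :
    augMonomial σ R k = 1 := by
  simp [augMonomial]

lemma augMonomial_cons [DecidableEq σ] {s : ℕ} (l : ℕ+) (k : Fin s → ℕ+) :
    augMonomial σ R (Fin.cons l k : Fin (s + 1) → ℕ+) =
      ∑ f : Fin s ↪ σ, ∑ i with i ∉ Set.range f, X i ^ (l : ℕ) * ∏ j, X (f j) ^ (k j : ℕ) := by
  rw [augMonomial, ← (Equiv.embeddingFinSucc s σ).symm.sum_comp, Fintype.sum_sigma]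
  refine Finset.sum_congr rfl fun f _ => ?_
  rw [← Finset.sum_subtype_eq_sum_filter, Finset.subtype_univ]
  simp only [Fin.prod_univ_succ, Equiv.coe_embeddingFinSucc_symm, Fin.cons_zero, Fin.cons_succ]

lemma augMonomial_update_add {ι : Type*} [Fintype ι] [DecidableEq ι] (l : ℕ+) (k : ι → ℕ+)
    (j : ι) :
    augMonomial σ R (Function.update k j (k j + l)) =
      ∑ f : ι ↪ σ, X (f j) ^ (l : ℕ) * ∏ i, X (f i) ^ (k i : ℕ) := by
  refine Finset.sum_congr rfl fun f _ => ?_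
  have hexponent : ∀ i, X (f i) ^ (Function.update k j (k j + l) i : ℕ) =
      (if i = j then X (f j) ^ (l : ℕ) else 1) * (X (f i) ^ (k i : ℕ) : MvPolynomial σ R) := by
    intro i
    rcases eq_or_ne i j with rfl | hij
    · simp [pow_add, mul_comm]
    · simp [hij]
  simp only [hexponent, Finset.prod_mul_distrib, Finset.prod_ite_eq', Finset.mem_univ, if_true]

lemma psum_mul_augMonomial {s : ℕ} (l : ℕ+) (k : Fin s → ℕ+) :
    psum σ R l * augMonomial σ R k = augMonomial σ R (Fin.cons l k : Fin (s + 1) → ℕ+) +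
      ∑ j, augMonomial σ R (Function.update k j (k j + l)) := by
  classical
  simp only [augMonomial_cons, augMonomial_update_add]
  rw [Finset.sum_comm, ← Finset.sum_add_distrib, augMonomial, Finset.mul_sum]
  refine Finset.sum_congr rfl fun f _ => ?_
  have hrange : Finset.univ.filter (· ∈ Set.range f) = Finset.univ.map f := by
    ext
    simp
  rw [psum, Finset.sum_mul, ← Finset.sum_filter_not_add_sum_filter _ (· ∈ Set.range f), hrange,
    Finset.sum_map]

lemma card_filter_map_univ_eq [DecidableEq σ] {ι : Type*} [Fintype ι] {t : Finset σ}
    (ht : t.card = Fintype.card ι) :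
    (Finset.univ.filter fun f : ι ↪ σ => Finset.univ.map f = t).card = t.card.factorial := by
  have hcard : Fintype.card (ι ↪ t) = t.card.factorial := by
    rw [Fintype.card_embedding_eq, Fintype.card_coe, ← ht, Nat.descFactorial_self]
  rw [← hcard, ← Finset.card_univ]
  symm
  refine Finset.card_bij (fun g _ => g.trans (.subtype _)) (fun g _ => ?_) (fun g _ g' _ h => ?_)
    fun f hf => ?_
  · refine Finset.mem_filter.2 ⟨Finset.mem_univ _, Finset.eq_of_subset_of_card_le ?_ ?_⟩
    · intro x hx
      obtain ⟨j, -, rfl⟩ := Finset.mem_map.1 hx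
      exact (g j).2
    · rw [Finset.card_map, Finset.card_univ, ht]
  · ext j
    exact DFunLike.congr_fun h j
  · have hmem : ∀ j, f j ∈ t := fun j =>
      (Finset.mem_filter.1 hf).2 ▸ Finset.mem_map_of_mem f (Finset.mem_univ j)
    exact ⟨f.codRestrict t hmem, Finset.mem_univ _, rfl⟩

lemma augMonomial_one (n : ℕ) :
    augMonomial σ R (fun _ : Fin n => 1) = n.factorial • esymm σ R n := by
  classical
  have himage : ∀ f ∈ (Finset.univ : Finset (Fin n ↪ σ)),
      Finset.univ.map f ∈ Finset.powersetCard n (Finset.univ : Finset σ) := by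
    simp [Finset.mem_powersetCard]
  rw [augMonomial, ← Finset.sum_fiberwise_of_maps_to himage, esymm, Finset.smul_sum]
  refine Finset.sum_congr rfl fun t ht => ?_
  have hcard : t.card = n := (Finset.mem_powersetCard.1 ht).2
  have hconst : ∀ f ∈ Finset.univ.filter (fun f : Fin n ↪ σ => Finset.univ.map f = t),
      ∏ j, X (f j) ^ ((1 : ℕ+) : ℕ) = ∏ i ∈ t, (X i : MvPolynomial σ R) := by
    intro f hf
    rw [← (Finset.mem_filter.1 hf).2, Finset.prod_map]
    simp
  rw [Finset.sum_congr rfl hconst, Finset.sum_const, card_filter_map_univ_eq (by simp [hcard]),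
    hcard]

lemma map_augMonomial_of_map_monomial {M : Type*} [CommSemiring M] [Module R M]
    {ψ : MvPolynomial σ R →ₗ[R] M} {c : ℕ → M} (hc : c 0 = 1)
    (hψ : ∀ d, ψ (monomial d 1) = ∏ i, c (d i)) {ι : Type*} [Fintype ι] (k : ι → ℕ+) :
    ψ (augMonomial σ R k) = (Fintype.card σ).descFactorial (Fintype.card ι) * ∏ j, c (k j) := by
  have hprod : ∀ f : ι ↪ σ, ψ (∏ j, X (f j) ^ (k j : ℕ)) = ∏ j, c (k j) := by
    intro f
    have hmonomial : ∏ j, X (f j) ^ (k j : ℕ) =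
        monomial (Finsupp.embDomain f (Finsupp.equivFunOnFinite.symm fun j => (k j : ℕ)))
          (1 : R) := by
      rw [monomial_eq, Finsupp.prod_embDomain, Finsupp.prod_fintype] <;> simp
    rw [hmonomial, hψ]
    refine (Fintype.prod_of_injective f f.injective _ _ (fun i hi => ?_) fun j => ?_).symm
    · rw [Finsupp.embDomain_of_notMem_range _ _ _ hi, hc]
    · simp
  simp only [augMonomial, map_sum, hprod, Finset.sum_const, Finset.card_univ,
    Fintype.card_embedding_eq, nsmul_eq_mul]

end AugmentedMonomial

section Limit

open Polynomial

/-- The limit of the power sums `∑ i, x_i ^ l` of an array that is standardized in the sense of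
`convergesTo_one`: the standard Gaussian variable `X` for `l = 1`, and `1`, `0` for `l = 2`,
`l > 2`. -/
def psumLimit (R : Type*) [CommRing R] (l : ℕ+) : R[X] :=
  if l = 1 then X else if l = 2 then 1 else 0

/-- The limit of the augmented monomials with exponents `k`. -/
def augMonomialLimit (R : Type*) [CommRing R] {ι : Type*} [Fintype ι] (k : ι → ℕ+) : R[X] :=
  wick R (∏ j, psumLimit R (k j))

variable {R : Type*} [CommRing R]

lemma derivative_psumLimit (l : ℕ+) : derivative (psumLimit R l) = if l = 1 then 1 else 0 := by
  unfold psumLimit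
  split_ifs <;> simp

lemma eval_zero_psumLimit (l : ℕ+) : (psumLimit R l).eval 0 = if l = 2 then 1 else 0 := by
  unfold psumLimit
  split_ifs <;> simp_all

lemma psumLimit_add (k l : ℕ+) :
    psumLimit R (k + l) = derivative (psumLimit R k) * derivative (psumLimit R l) := by
  have hk := k.pos
  have hl := l.pos
  have hne_one : k + l ≠ 1 := by
    rw [ne_eq, ← PNat.coe_inj, PNat.add_coe, PNat.one_coe]
    omega
  have heq_two : k + l = 2 ↔ k = 1 ∧ l = 1 := by
    rw [← PNat.coe_inj, ← PNat.coe_inj, ← PNat.coe_inj, PNat.add_coe, PNat.one_coe, PNat.val_ofNat]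
    omega
  rw [psumLimit, if_neg hne_one, derivative_psumLimit, derivative_psumLimit, ite_zero_mul_ite_zero,
    one_mul]
  exact if_congr heq_two rfl rfl

lemma psumLimit_mul_wick (l : ℕ+) (p : R[X]) :
    psumLimit R l * wick R p =
      wick R (psumLimit R l * p) + wick R (derivative p * derivative (psumLimit R l)) := by
  rw [derivative_psumLimit, psumLimit]
  split_ifs <;> simp [X_mul_wick]

lemma augMonomialLimit_of_isEmpty {ι : Type*} [Fintype ι] [IsEmpty ι] (k : ι → ℕ+) :
    augMonomialLimit R k = 1 := by
  simp [augMonomialLimit, wick_one]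

lemma augMonomialLimit_one (n : ℕ) :
    augMonomialLimit R (fun _ : Fin n => 1) = (hermite n).map (Int.castRingHom R) := by
  simp [augMonomialLimit, psumLimit, wick_X_pow]

lemma psumLimit_mul_augMonomialLimit {s : ℕ} (l : ℕ+) (k : Fin s → ℕ+) :
    psumLimit R l * augMonomialLimit R k =
      augMonomialLimit R (Fin.cons l k : Fin (s + 1) → ℕ+) +
        ∑ j, augMonomialLimit R (Function.update k j (k j + l)) := by
  have hupdate : ∀ j, ∏ i, psumLimit R (Function.update k j (k j + l) i) =
      (∏ i ∈ Finset.univ.erase j, psumLimit R (k i)) * derivative (psumLimit R (k j)) *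
        derivative (psumLimit R l) := by
    intro j
    rw [← Finset.prod_erase_mul _ _ (Finset.mem_univ j), Function.update_self, psumLimit_add,
      mul_assoc]
    congr 1
    exact Finset.prod_congr rfl fun i hi => by
      rw [Function.update_of_ne (Finset.ne_of_mem_erase hi)]
  simp only [augMonomialLimit, hupdate, psumLimit_mul_wick, derivative_prod_finset, Finset.sum_mul,
    map_sum, Fin.prod_univ_succ, Fin.cons_zero, Fin.cons_succ]

lemma gaussianExpectation_augMonomialLimit {ι : Type*} [Fintype ι] (k : ι → ℕ+) :
    gaussianExpectation (augMonomialLimit ℝ k) = ∏ j, if k j = 2 then 1 else 0 := by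
  simp only [augMonomialLimit, gaussianExpectation_wick, eval_prod, eval_zero_psumLimit]

end Limit

section Convergence

open MvPolynomial

variable {𝕜 : Type*} [RCLike 𝕜]

/-- Under the functionals `ψ N`, the polynomials `a N` behave in the limit like `p(g)` for a
standard Gaussian `g`, in products with an arbitrary augmented monomial. Testing against these
rather than just taking `ψ N (a N)` is what makes the notion stable under products. -/
def ConvergesTo (ψ : ∀ N, MvPolynomial (Fin N) 𝕜 →ₗ[𝕜] 𝕜) (a : ∀ N, MvPolynomial (Fin N) 𝕜)
    (p : Polynomial ℝ) : Prop :=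
  ∀ ⦃s : ℕ⦄ (k : Fin s → ℕ+), Tendsto (fun N => ψ N (a N * augMonomial (Fin N) 𝕜 k)) atTop
    (𝓝 (gaussianExpectation (p * augMonomialLimit ℝ k) : 𝕜))

lemma tendsto_descFactorial_div_pow (s : ℕ) :
    Tendsto (fun N : ℕ => (N.descFactorial s : 𝕜) / (N : 𝕜) ^ s) atTop (𝓝 1) := by
  have hreal : Tendsto (fun N : ℕ => (N.descFactorial s : ℝ) / (N : ℝ) ^ s) atTop (𝓝 1) := by
    refine (Asymptotics.isEquivalent_iff_tendsto_one ?_).1 (isEquivalent_descFactorial s)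
    filter_upwards [eventually_ne_atTop 0] with N hN using by positivity
  have h := (RCLike.continuous_ofReal (K := 𝕜)).continuousAt.tendsto.comp hreal
  simpa [Function.comp_def] using h

lemma convergesTo_one {ψ : ∀ N, MvPolynomial (Fin N) 𝕜 →ₗ[𝕜] 𝕜} {c : ℕ → ℕ → 𝕜}
    (hψ : ∀ N d, ψ N (monomial d 1) = ∏ i, c N (d i)) (hc0 : ∀ N, c N 0 = 1)
    (hc : ∀ l : ℕ+, Tendsto (fun N : ℕ => N * c N l) atTop (𝓝 (if l = 2 then 1 else 0))) :
    ConvergesTo ψ (fun _ => 1) 1 := by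
  intro s k
  have hlim := (tendsto_descFactorial_div_pow (𝕜 := 𝕜) s).mul
    (tendsto_finsetProd Finset.univ fun j _ => hc (k j))
  simp only [one_mul, gaussianExpectation_augMonomialLimit] at hlim ⊢
  simp only [RCLike.ofReal_prod, apply_ite (RCLike.ofReal (K := 𝕜)), RCLike.ofReal_one,
    RCLike.ofReal_zero]
  refine hlim.congr' ?_
  filter_upwards [eventually_ne_atTop 0] with N hN
  rw [map_augMonomial_of_map_monomial (hc0 N) (hψ N), Finset.prod_mul_distrib, Finset.prod_const,
    Finset.card_univ, Fintype.card_fin, Fintype.card_fin]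
  field_simp

namespace ConvergesTo

variable {ψ : ∀ N, MvPolynomial (Fin N) 𝕜 →ₗ[𝕜] 𝕜} {a a' : ∀ N, MvPolynomial (Fin N) 𝕜}
  {p p' : Polynomial ℝ}

lemma sub (h : ConvergesTo ψ a p) (h' : ConvergesTo ψ a' p') :
    ConvergesTo ψ (fun N => a N - a' N) (p - p') := by
  intro s k
  simpa only [sub_mul, map_sub, RCLike.ofReal_sub] using (h k).sub (h' k)

lemma sum {ι : Type*} (t : Finset ι) {a : ι → ∀ N, MvPolynomial (Fin N) 𝕜}
    {p : ι → Polynomial ℝ} (h : ∀ i ∈ t, ConvergesTo ψ (a i) (p i)) :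
    ConvergesTo ψ (fun N => ∑ i ∈ t, a i N) (∑ i ∈ t, p i) := by
  intro s k
  simpa only [Finset.sum_mul, map_sum, RCLike.ofReal_sum] using
    tendsto_finsetSum t fun i hi => h i hi k

lemma psum_mul (h : ConvergesTo ψ a p) (l : ℕ+) :
    ConvergesTo ψ (fun N => psum (Fin N) 𝕜 l * a N) (psumLimit ℝ l * p) := by
  intro s k
  have hlim := (h (Fin.cons l k)).add
    (tendsto_finsetSum Finset.univ fun j _ => h (Function.update k j (k j + l)))
  simpa only [← RCLike.ofReal_sum, ← RCLike.ofReal_add, ← map_sum, ← map_add, ← Finset.mul_sum,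
    ← mul_add, ← psum_mul_augMonomial, ← psumLimit_mul_augMonomialLimit, mul_left_comm, mul_assoc]
    using hlim

lemma augMonomial_mul (h : ConvergesTo ψ a p) {s : ℕ} (k : Fin s → ℕ+) :
    ConvergesTo ψ (fun N => augMonomial (Fin N) 𝕜 k * a N) (augMonomialLimit ℝ k * p) := by
  induction s with
  | zero => simpa only [augMonomial_of_isEmpty, augMonomialLimit_of_isEmpty, one_mul] using h
  | succ s ih =>
    obtain ⟨l, k, rfl⟩ : ∃ l k', k = Fin.cons l k' :=
      ⟨k 0, Fin.tail k, (Fin.cons_self_tail k).symm⟩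
    have hlim := ((ih k).psum_mul l).sub
      (.sum Finset.univ fun j _ => ih (Function.update k j (k j + l)))
    simpa only [← mul_assoc, ← Finset.sum_mul, ← sub_mul, psum_mul_augMonomial,
      psumLimit_mul_augMonomialLimit, add_sub_cancel_right] using hlim

lemma augMonomial_pow (h : ConvergesTo ψ (fun _ => 1) 1) {s : ℕ} (k : Fin s → ℕ+) (m : ℕ) :
    ConvergesTo ψ (fun N => augMonomial (Fin N) 𝕜 k ^ m) (augMonomialLimit ℝ k ^ m) := by
  induction m with
  | zero => simpa only [pow_zero] using h
  | succ m ih => simpa only [pow_succ'] using ih.augMonomial_mul k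

lemma tendsto (h : ConvergesTo ψ a p) :
    Tendsto (fun N => ψ N (a N)) atTop (𝓝 (gaussianExpectation p : 𝕜)) := by
  simpa only [augMonomial_of_isEmpty, augMonomialLimit_of_isEmpty, mul_one] using
    h (Fin.elim0 : Fin 0 → ℕ+)

end ConvergesTo

theorem tendsto_factorial_smul_esymm_pow {ψ : ∀ N, MvPolynomial (Fin N) 𝕜 →ₗ[𝕜] 𝕜}
    {c : ℕ → ℕ → 𝕜} (hψ : ∀ N d, ψ N (monomial d 1) = ∏ i, c N (d i)) (hc0 : ∀ N, c N 0 = 1)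
    (hc : ∀ l : ℕ+, Tendsto (fun N : ℕ => N * c N l) atTop (𝓝 (if l = 2 then 1 else 0)))
    (n m : ℕ) :
    Tendsto (fun N => ψ N (((n.factorial : 𝕜) • esymm (Fin N) 𝕜 n) ^ m)) atTop
      (𝓝 ((∫ x, (Polynomial.aeval x (Polynomial.hermite n) : ℝ) ^ m
        ∂(ProbabilityTheory.gaussianReal 0 1) : ℝ) : 𝕜)) := by
  have hlim := ((convergesTo_one hψ hc0 hc).augMonomial_pow (fun _ : Fin n => 1) m).tendsto
  simpa only [augMonomial_one, ← Nat.cast_smul_eq_nsmul 𝕜, augMonomialLimit_one,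
    gaussianExpectation_apply, Polynomial.eval_pow, Polynomial.eval_map, Polynomial.aeval_def,
    algebraMap_int_eq] using hlim

end Convergence

section TensorPower

section polyToTensor

variable {R ι : Type*} {A : ι → Type*} [CommSemiring R] [∀ i, Semiring (A i)]
  [∀ i, Algebra R (A i)]

/-- The algebra homomorphism from polynomials in commuting variables `x_i` to the tensor product of
the algebras `A i` that sends `x_i` to `b i` placed at the `i`-th tensor factor. -/
def polyToTensor (b : ∀ i, A i) : MvPolynomial ι R →ₐ[R] ⨂[R] i, A i :=
  AddMonoidAlgebra.lift R _ _ <| (PiTensorProduct.tprodMonoidHom R).comp <|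
    MonoidHom.pi fun i => (powersHom (A i) (b i)).comp (Finsupp.applyAddHom i).toMultiplicative

lemma polyToTensor_monomial (b : ∀ i, A i) (d : ι →₀ ℕ) :
    polyToTensor b (MvPolynomial.monomial d (1 : R)) =
      PiTensorProduct.tprod R fun i => b i ^ d i := by
  rw [polyToTensor, ← MvPolynomial.single_eq_monomial, AddMonoidAlgebra.lift_single, one_smul]
  rfl

lemma polyToTensor_X [DecidableEq ι] (b : ∀ i, A i) (i : ι) :
    polyToTensor b (MvPolynomial.X i : MvPolynomial ι R) =
      PiTensorProduct.tprod R (Function.update 1 i (b i)) := by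
  rw [MvPolynomial.X, polyToTensor_monomial]
  congr 1
  ext j
  rcases eq_or_ne j i with rfl | hij
  · simp
  · simp [hij, Finsupp.single_eq_of_ne hij]

end polyToTensor

variable {A : Type*} [Ring A] [Algebra ℂ A]

lemma polyToTensor_esymm (b : A) (N n : ℕ) :
    polyToTensor (fun _ => b) (MvPolynomial.esymm (Fin N) ℂ n) = bPow b N n := by
  rw [MvPolynomial.esymm, bPow, map_sum]
  refine Finset.sum_congr rfl fun s _ => ?_
  have hsort : ∏ i ∈ s, (MvPolynomial.X i : MvPolynomial (Fin N) ℂ) =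
      ((s.sort (· ≤ ·)).map MvPolynomial.X).prod := by
    rw [← Multiset.prod_coe, ← Multiset.map_coe, Finset.sort_eq]
    rfl
  rw [hsort, map_list_prod, List.map_map]
  congr 2
  ext i
  exact polyToTensor_X _ i

lemma elemAt_smul (r : ℂ) (b : A) (N : ℕ) (i : Fin N) : elemAt (r • b) N i = r • elemAt b N i :=
  MultilinearMap.map_update_smul (PiTensorProduct.tprod ℂ) (fun _ => (1 : A)) i r b

lemma bPow_smul (r : ℂ) (b : A) (N n : ℕ) : bPow (r • b) N n = r ^ n • bPow b N n := by
  rw [bPow, bPow, Finset.smul_sum]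
  refine Finset.sum_congr rfl fun s hs => ?_
  have hmap : (s.sort (· ≤ ·)).map (elemAt (r • b) N) =
      ((s.sort (· ≤ ·)).map (elemAt b N)).map (r • ·) := by
    rw [List.map_map]
    exact List.map_congr_left fun i _ => elemAt_smul r b N i
  rw [hmap, ← List.smul_prod, List.length_map, Finset.length_sort,
    (Finset.mem_powersetCard.1 hs).2]

lemma prodState_polyToTensor_monomial (φ : A →ₗ[ℂ] ℂ) (b : A) (N : ℕ) (d : Fin N →₀ ℕ) :
    prodState φ N (polyToTensor (fun _ => b) (MvPolynomial.monomial d 1)) = ∏ i, φ (b ^ d i) := by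
  rw [polyToTensor_monomial, prodState, PiTensorProduct.lift.tprod]
  simp

end TensorPower

section Normalization

/-- The factor `N^{-1/2}` normalizing a sum of `N` independent variables of unit variance. -/
def normScale (N : ℕ) : ℂ := (((N : ℝ) ^ (-1 / 2 : ℝ) : ℝ) : ℂ)

lemma normScale_pow (N n : ℕ) : normScale N ^ n = (((N : ℝ) ^ (-(n : ℝ) / 2) : ℝ) : ℂ) := by
  rw [normScale, ← Complex.ofReal_pow, ← Real.rpow_mul_natCast N.cast_nonneg, div_mul_eq_mul_div,
    neg_one_mul]

lemma natCast_mul_normScale_sq {N : ℕ} (hN : N ≠ 0) : (N : ℂ) * normScale N ^ 2 = 1 := by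
  rw [normScale_pow, Nat.cast_ofNat, neg_div_self two_ne_zero, Real.rpow_neg_one,
    Complex.ofReal_inv, Complex.ofReal_natCast, mul_inv_cancel₀ (Nat.cast_ne_zero.2 hN)]

lemma tendsto_normScale : Tendsto normScale atTop (𝓝 0) := by
  have hreal : Tendsto (fun N : ℕ => (N : ℝ) ^ (-1 / 2 : ℝ)) atTop (𝓝 0) := by
    rw [neg_div]
    exact (tendsto_rpow_neg_atTop one_half_pos).comp tendsto_natCast_atTop_atTop
  exact Complex.ofReal_zero ▸ (Complex.continuous_ofReal.tendsto 0).comp hreal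

lemma tendsto_natCast_mul_normScale_pow {r : ℕ → ℂ} (hr1 : r 1 = 0) (hr2 : r 2 = 1) (l : ℕ+) :
    Tendsto (fun N : ℕ => N * (normScale N ^ (l : ℕ) * r l)) atTop
      (𝓝 (if l = 2 then 1 else 0)) := by
  rcases eq_or_ne l 1 with rfl | hl
  · simp [hr1]
  obtain ⟨j, hj⟩ : ∃ j, (l : ℕ) = j + 2 :=
    Nat.exists_eq_add_of_le' ((PNat.coe_lt_coe 1 l).2 (one_le.lt_of_ne' hl))
  have hvalue : 0 ^ j * r l = if l = 2 then 1 else 0 := by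
    have hj0 : l = 2 ↔ j = 0 := by
      rw [← PNat.coe_inj, hj, PNat.val_ofNat, Nat.add_eq_right]
    rcases eq_or_ne j 0 with rfl | hne
    · simp [hj, hj0, hr2]
    · simp [hj0, hne]
  rw [← hvalue]
  refine ((tendsto_normScale.pow j).mul_const (r l)).congr' ?_
  filter_upwards [eventually_ne_atTop 0] with N hN
  rw [hj, pow_add, mul_right_comm, mul_left_comm, natCast_mul_normScale_sq hN, mul_one]

end Normalization

theorem bPow_tendsto_hermite_of_gaussian_general
    {A : Type*} [Ring A] [Algebra ℂ A] (φ : A →ₗ[ℂ] ℂ) (hφ_unital : φ 1 = 1)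
    (b : A) (hb1 : φ b = 0) (hb2 : φ (b * b) = 1) (n m : ℕ) :
    Tendsto
      (fun N : ℕ =>
        prodState φ N
          ((((n.factorial : ℂ) * (((N : ℝ) ^ (-(n : ℝ) / 2) : ℝ) : ℂ)) • bPow b N n) ^ m))
      atTop
      (𝓝 ((∫ x : ℝ, (Polynomial.aeval x (Polynomial.hermite n) : ℝ) ^ m
            ∂(ProbabilityTheory.gaussianReal 0 1) : ℝ) : ℂ)) := by
  have hmoment : ∀ N l, φ ((normScale N • b) ^ l) = normScale N ^ l * φ (b ^ l) := by
    intro N l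
    rw [smul_pow, map_smul, smul_eq_mul]
  have hlim := tendsto_factorial_smul_esymm_pow (𝕜 := ℂ) (n := n) (m := m)
    (ψ := fun N => prodState φ N ∘ₗ (polyToTensor fun _ => normScale N • b).toLinearMap)
    (c := fun N l => φ ((normScale N • b) ^ l))
    (fun N d => prodState_polyToTensor_monomial φ (normScale N • b) N d)
    (fun N => by rw [pow_zero, hφ_unital])
    (fun l => by
      simpa only [hmoment] using tendsto_natCast_mul_normScale_pow (r := fun l => φ (b ^ l))
        (by rw [pow_one, hb1]) (by rw [pow_two, hb2]) l)
  simpa only [LinearMap.comp_apply, AlgHom.toLinearMap_apply, map_pow, map_smul,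
    polyToTensor_esymm, bPow_smul, normScale_pow, smul_smul,
    RCLike.ofReal_eq_complex_ofReal] using hlim

/-- Theorem 3.3: for a self-adjoint `b` with `φ(b) = 0` and `φ(b²) = 1`, the normalized
sums `n!·b^{(N,n)}/N^{n/2}` converge in moments (w.r.t. the product states `φ^{⊗N}`) to
`H̃_n(g)` where `g` is standard Gaussian and `H̃_n` is the monic Hermite polynomial of
degree `n`. -/
theorem bPow_tendsto_hermite_of_gaussian
    {A : Type*} [Ring A] [Algebra ℂ A] [StarRing A] [StarModule ℂ A]
    (φ : A →ₗ[ℂ] ℂ) (hφ_unital : φ 1 = 1) (hφ_pos : ∀ a, 0 ≤ φ (star a * a))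
    (b : A) (hb : star b = b) (hb1 : φ b = 0) (hb2 : φ (b * b) = 1)
    (n : ℕ) (hn : 1 ≤ n) (m : ℕ) (hm : 1 ≤ m) :
    Tendsto
      (fun N : ℕ =>
        prodState φ N
          ((((n.factorial : ℂ) * (((N : ℝ) ^ (-(n : ℝ) / 2) : ℝ) : ℂ)) • bPow b N n) ^ m))
      atTop
      (𝓝 ((∫ x : ℝ, (Polynomial.aeval x (Polynomial.hermite n) : ℝ) ^ m
            ∂(ProbabilityTheory.gaussianReal 0 1) : ℝ) : ℂ)) :=
  bPow_tendsto_hermite_of_gaussian_general φ hφ_unital b hb1 hb2 n m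
end
end
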